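/- arXiv:2206.09343 — 3 statements merged into one kernel-verified Lean document; each statement's English description precedes it below -/
import Mathlib

section
/- Let Ω ⊆ ℝ² be open, let g : Ω → (symmetric positive definite real 2×2 matrices) be C¹, and let γ : ℝ → Ω be C² with τ(t) := γ'(t) ≠ 0 for all t. Define the g-arclength s(t) = ∫₀ᵗ √(τ(α)ᵀ g(γ(α)) τ(α)) dα and let φ : ℝ → ℝ be differentiable with φ(s(t)) = t and s(φ(r)) = r for all t, r. Set μ = γ∘φ and T = μ'. Then T is differentiable, and the geodesic curvature κ(r) := (T'(r) + Γ(T(r),T(r)))ᵀ g(μ(r)) N(r), where (Γ(v,w))^k = Γ^k_{ij}(γ-point) v^i w^j and N(r) is the g-unit normal of T(r) computed with g(μ(r)), satisfies at r = s(t): κ(s(t)) = (√(det g) / (τᵀ g τ)^{3/2}) · ( γ''(t)·ν + τ^i τ^j Γ^k_{ij} δ_{kl} ν^l ), where ν is the Euclidean rotated normal of τ(t) and all g-dependent quantities on the right are evaluated at γ(t). -/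
noncomputable section

open Matrix BigOperators

abbrev Vec2 := Fin 2 → ℝ
abbrev Mat2 := Matrix (Fin 2) (Fin 2) ℝ

/-- The two-dimensional alternating symbol: `eps2 0 1 = 1`, `eps2 1 0 = -1`, `eps2 i i = 0`. -/
def eps2 (i j : Fin 2) : ℝ := (j.1 : ℝ) - (i.1 : ℝ)

/-- Euclidean rotated normal `ν = (-τ², τ¹)` of a vector `τ`. -/
def rot2 (τ : Vec2) : Vec2 := ![-(τ 1), τ 0]

/-- The `g`-rotated normal `ν̃^k = -g^{kj} ε_{ji} τ^i`. -/
def gNormal (g : Mat2) (τ : Vec2) : Vec2 :=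
  fun k => -∑ j, ∑ i, g⁻¹ k j * eps2 j i * τ i

/-- The `g`-unit tangent `τ̂ = τ / √(τᵀ g τ)`. -/
def gUnitTangent (g : Mat2) (τ : Vec2) : Vec2 :=
  (Real.sqrt (τ ⬝ᵥ g.mulVec τ))⁻¹ • τ

/-- The `g`-unit normal `n̂ = ν̃ / √(ν̃ᵀ g ν̃)`. -/
def gUnitNormal (g : Mat2) (τ : Vec2) : Vec2 :=
  (Real.sqrt (gNormal g τ ⬝ᵥ g.mulVec (gNormal g τ)))⁻¹ • gNormal g τ

/-- Partial derivative `∂_i f (x)`. -/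
def pd (i : Fin 2) (f : Vec2 → ℝ) (x : Vec2) : ℝ := fderiv ℝ f x (Pi.single i 1)

/-- Christoffel symbol of the first kind `Γ_{ijl} = ½(∂_i g_{jl} + ∂_j g_{li} - ∂_l g_{ij})`. -/
def Gamma1 (g : Vec2 → Mat2) (x : Vec2) (i j l : Fin 2) : ℝ :=
  (pd i (fun y => g y j l) x + pd j (fun y => g y l i) x - pd l (fun y => g y i j) x) / 2

/-- Christoffel symbol of the second kind `Γ^k_{ij} = g^{kl} Γ_{ijl}`. -/
def Gamma2 (g : Vec2 → Mat2) (x : Vec2) (i j k : Fin 2) : ℝ :=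
  ∑ l, (g x)⁻¹ k l * Gamma1 g x i j l

/-- Euclidean incompatibility `inc σ = ∂₁∂₁σ₂₂ - 2 ∂₁∂₂σ₁₂ + ∂₂∂₂σ₁₁`. -/
def incE (σ : Vec2 → Mat2) (x : Vec2) : ℝ :=
  pd 0 (pd 0 (fun y => σ y 1 1)) x - 2 * pd 0 (pd 1 (fun y => σ y 0 1)) x
    + pd 1 (pd 1 (fun y => σ y 0 0)) x

/-- Covariant curl `(curl_g σ)_i = (det g)^{-1/2} ε^{jk}(∂_j σ_{ik} - Γ^m_{ji} σ_{mk})`. -/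
def curlg (g σ : Vec2 → Mat2) (x : Vec2) (i : Fin 2) : ℝ :=
  (Real.sqrt (g x).det)⁻¹ * ∑ j, ∑ k, eps2 j k *
    (pd j (fun y => σ y i k) x - ∑ m, Gamma2 g x j i m * σ x m k)

/-- Covariant incompatibility `inc_g σ`. -/
def incg (g σ : Vec2 → Mat2) (x : Vec2) : ℝ :=
  ((g x).det)⁻¹ *
    ((∑ q, ∑ i, ∑ j, ∑ k, eps2 q i * eps2 j k * pd j (pd q (fun y => σ y i k)) x)
      - (∑ q, ∑ i, ∑ j, ∑ k, eps2 q i * eps2 j k *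
          pd q (fun y => ∑ m, Gamma2 g y j i m * σ y m k) x)
      - (∑ q, ∑ i, ∑ j, ∑ k, (∑ l, Gamma2 g x l q l) * eps2 q i * eps2 j k *
          (pd j (fun y => σ y i k) x - ∑ m, Gamma2 g x j i m * σ x m k)))

/-- Coordinate Riemann component `R₁₂₂₁ = ∂₁Γ₂₂₁ - ∂₂Γ₁₂₁ - Γ₁₁ₚΓᵖ₂₂ + Γ₂₁ₚΓᵖ₁₂`. -/
def R1221 (g : Vec2 → Mat2) (x : Vec2) : ℝ :=
  pd 0 (fun y => Gamma1 g y 1 1 0) x - pd 1 (fun y => Gamma1 g y 0 1 0) x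
    - (∑ p, Gamma1 g x 0 0 p * Gamma2 g x 1 1 p)
    + (∑ p, Gamma1 g x 1 0 p * Gamma2 g x 0 1 p)

/-!
Write `κ(v, a) = √(det g) / |v|_g ^ 3 * ((a + Γ(v, v)) · ν)` for a curve with velocity `v` and
acceleration `a`.  Because `g n̂ = (√(det g) / |v|_g) ν`, this is `(a + Γ(v, v))ᵀ g n̂` when
`|v|_g = 1`.  A reparametrization by an increasing `φ` replaces `(v, a)` by
`(φ' v, φ' ^ 2 a + φ'' v)`: since `v · ν = 0`, the term in `φ''` disappears, and the remaining
`φ' ^ 3` cancels against `|φ' v|_g ^ 3`.  So `κ(γ', γ'')` may be computed in arclength.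
-/

section UnitNormal

lemma rot2_smul (c : ℝ) (v : Vec2) : rot2 (c • v) = c • rot2 v := by
  ext k
  fin_cases k <;> simp [rot2]

lemma dotProduct_rot2_self (v : Vec2) : v ⬝ᵥ rot2 v = 0 := by
  simp only [rot2, dotProduct, Fin.sum_univ_two, cons_val_zero, cons_val_one]
  ring

lemma rot2_dotProduct_adjugate_mulVec_rot2 (G : Mat2) (v : Vec2) :
    rot2 v ⬝ᵥ G.adjugate *ᵥ rot2 v = v ⬝ᵥ G *ᵥ v := by
  simp only [adjugate_fin_two, rot2, mulVec, dotProduct, Fin.sum_univ_two, of_apply,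
    cons_val_zero, cons_val_one, cons_val', cons_val_fin_one]
  ring

lemma gNormal_eq_inv_mulVec_rot2 (G : Mat2) (v : Vec2) : gNormal G v = G⁻¹ *ᵥ rot2 v := by
  ext k
  simp only [gNormal, mulVec, dotProduct, Fin.sum_univ_two, eps2, rot2, cons_val_zero,
    cons_val_one, Fin.val_zero, Fin.val_one, Nat.cast_zero, Nat.cast_one]
  ring

variable {G : Mat2}

lemma mulVec_gNormal (hG : IsUnit G.det) (v : Vec2) : G *ᵥ gNormal G v = rot2 v := by
  rw [gNormal_eq_inv_mulVec_rot2, mulVec_mulVec, mul_nonsing_inv _ hG, one_mulVec]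

lemma gNormal_dotProduct_mulVec_self (hG : IsUnit G.det) (v : Vec2) :
    gNormal G v ⬝ᵥ G *ᵥ gNormal G v = (v ⬝ᵥ G *ᵥ v) / G.det := by
  rw [mulVec_gNormal hG, gNormal_eq_inv_mulVec_rot2, dotProduct_comm, inv_def, smul_mulVec,
    dotProduct_smul, rot2_dotProduct_adjugate_mulVec_rot2, Ring.inverse_eq_inv', smul_eq_mul,
    inv_mul_eq_div]

lemma mulVec_gUnitNormal (hG : 0 < G.det) (v : Vec2) :
    G *ᵥ gUnitNormal G v = (√G.det / √(v ⬝ᵥ G *ᵥ v)) • rot2 v := by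
  have hG_unit : IsUnit G.det := hG.ne'.isUnit
  rw [gUnitNormal, mulVec_smul, gNormal_dotProduct_mulVec_self hG_unit, mulVec_gNormal hG_unit,
    Real.sqrt_div' _ hG.le, inv_div]

end UnitNormal

section CovariantAcceleration

variable {n R : Type*} [Fintype n] [CommSemiring R]

/-- The covariant acceleration `aᵏ + Γᵏᵢⱼ vⁱ vʲ` of a curve with velocity `v` and coordinate
acceleration `a`.  The connection coefficient `Γᵏᵢⱼ` is `Γ i j k`, as in `Gamma2`. -/
def covariantAcceleration (Γ : n → n → n → R) (v a : n → R) : n → R :=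
  fun k => a k + ∑ i, ∑ j, Γ i j k * v i * v j

lemma covariantAcceleration_reparam (Γ : n → n → n → R) (v a : n → R) (b c : R) :
    covariantAcceleration Γ (c • v) (c ^ 2 • a + b • v) =
      c ^ 2 • covariantAcceleration Γ v a + b • v := by
  have quadratic (k : n) : ∑ i, ∑ j, Γ i j k * (c • v) i * (c • v) j =
      c ^ 2 * ∑ i, ∑ j, Γ i j k * v i * v j := by
    simp only [Finset.mul_sum, Pi.smul_apply, smul_eq_mul]
    exact Finset.sum_congr rfl fun i _ => Finset.sum_congr rfl fun j _ => by ring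
  ext k
  rw [covariantAcceleration, quadratic]
  simp only [covariantAcceleration, Pi.add_apply, Pi.smul_apply, smul_eq_mul]
  ring

lemma covariantAcceleration_dotProduct (Γ : n → n → n → R) (v a w : n → R) :
    covariantAcceleration Γ v a ⬝ᵥ w =
      a ⬝ᵥ w + ∑ i, ∑ j, ∑ k, v i * v j * Γ i j k * w k := by
  simp only [covariantAcceleration, dotProduct, add_mul, Finset.sum_add_distrib, Finset.sum_mul]
  rw [Finset.sum_comm]
  congr! 2 with i
  rw [Finset.sum_comm]
  congr! 2 with j
  congr! 1 with k
  ring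

end CovariantAcceleration

section GeodesicCurvature

/-- The signed geodesic curvature of a regular plane curve in an arbitrary parametrization, as a
function of the metric `G`, the connection coefficients `Γ`, the velocity `v` and the coordinate
acceleration `a` at a single point. -/
def geodesicCurvature (G : Mat2) (Γ : Fin 2 → Fin 2 → Fin 2 → ℝ) (v a : Vec2) : ℝ :=
  √G.det / √(v ⬝ᵥ G *ᵥ v) ^ 3 * (covariantAcceleration Γ v a ⬝ᵥ rot2 v)

lemma sqrt_smul_dotProduct_mulVec_smul {n : Type*} [Fintype n] (G : Matrix n n ℝ) (v : n → ℝ)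
    {c : ℝ} (hc : 0 ≤ c) : √((c • v) ⬝ᵥ G *ᵥ (c • v)) = c * √(v ⬝ᵥ G *ᵥ v) := by
  rw [mulVec_smul, smul_dotProduct, dotProduct_smul, smul_smul, smul_eq_mul,
    Real.sqrt_mul (mul_self_nonneg c), Real.sqrt_mul_self hc]

lemma geodesicCurvature_reparam (G : Mat2) (Γ : Fin 2 → Fin 2 → Fin 2 → ℝ) (v a : Vec2) (b : ℝ)
    {c : ℝ} (hc : 0 < c) :
    geodesicCurvature G Γ (c • v) (c ^ 2 • a + b • v) = geodesicCurvature G Γ v a := by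
  have normal_component :
      covariantAcceleration Γ (c • v) (c ^ 2 • a + b • v) ⬝ᵥ rot2 (c • v) =
        c ^ 3 * (covariantAcceleration Γ v a ⬝ᵥ rot2 v) := by
    simp only [covariantAcceleration_reparam, rot2_smul, add_dotProduct, smul_dotProduct,
      dotProduct_smul, dotProduct_rot2_self, smul_eq_mul]
    ring
  rw [geodesicCurvature, geodesicCurvature, normal_component,
    sqrt_smul_dotProduct_mulVec_smul G v hc.le, mul_pow]
  field_simp

lemma covariantAcceleration_dotProduct_mulVec_gUnitNormal {G : Mat2} (hG : 0 < G.det)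
    (Γ : Fin 2 → Fin 2 → Fin 2 → ℝ) {v : Vec2} (hv : √(v ⬝ᵥ G *ᵥ v) = 1) (a : Vec2) :
    covariantAcceleration Γ v a ⬝ᵥ G *ᵥ gUnitNormal G v = geodesicCurvature G Γ v a := by
  rw [mulVec_gUnitNormal hG, dotProduct_smul, geodesicCurvature, hv, one_pow, smul_eq_mul]

end GeodesicCurvature

section Reparametrization

lemma hasDerivAt_deriv_comp {𝕜 E : Type*} [NontriviallyNormedField 𝕜] [NormedAddCommGroup E]
    [NormedSpace 𝕜 E] {γ : 𝕜 → E} {φ : 𝕜 → 𝕜} (hγ : Differentiable 𝕜 γ)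
    (hγ' : Differentiable 𝕜 (deriv γ)) (hφ : Differentiable 𝕜 φ)
    (hφ' : Differentiable 𝕜 (deriv φ)) (r : 𝕜) :
    HasDerivAt (deriv (γ ∘ φ))
      (deriv φ r ^ 2 • deriv (deriv γ) (φ r) + deriv (deriv φ) r • deriv γ (φ r)) r := by
  have velocity : deriv (γ ∘ φ) = deriv φ • (deriv γ ∘ φ) :=
    funext fun u => deriv.scomp u (hγ (φ u)) (hφ u)
  rw [velocity, sq, mul_smul]
  exact (hφ' r).hasDerivAt.smul ((hγ' (φ r)).hasDerivAt.scomp r (hφ r).hasDerivAt)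

lemma hasDerivAt_of_rightInverse_of_deriv_pos {s s' φ : ℝ → ℝ}
    (hs : ∀ t, HasDerivAt s (s' t) t) (hs_pos : ∀ t, 0 < s' t)
    (hsφ : Function.RightInverse φ s) (r : ℝ) : HasDerivAt φ (s' (φ r))⁻¹ r := by
  have s_mono : StrictMono s := strictMono_of_deriv_pos fun t => (hs t).deriv ▸ hs_pos t
  have φ_cont : Continuous φ := (s_mono.orderIsoOfRightInverse s φ hsφ).symm.continuous
  exact (hs (φ r)).of_local_left_inverse φ_cont.continuousAt (hs_pos _).ne'
    (Filter.Eventually.of_forall hsφ)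

lemma differentiable_sqrt_dotProduct_mulVec {n : Type*} [Fintype n] {G : ℝ → Matrix n n ℝ}
    {v : ℝ → n → ℝ} (hG : ∀ i j, Differentiable ℝ fun t => G t i j) (hv : Differentiable ℝ v)
    (hpos : ∀ t, 0 < v t ⬝ᵥ G t *ᵥ v t) :
    Differentiable ℝ fun t => √(v t ⬝ᵥ G t *ᵥ v t) := by
  have hv_coord (i : n) : Differentiable ℝ fun t => v t i := differentiable_pi.1 hv i
  refine Differentiable.sqrt ?_ fun t => (hpos t).ne'
  simp only [mulVec, dotProduct]
  fun_prop

end Reparametrization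

theorem geodesicCurvature_formula_general {γ : ℝ → Vec2} (hγ : Differentiable ℝ γ)
    (hγ' : Differentiable ℝ (deriv γ)) (hτ : ∀ t, deriv γ t ≠ 0) {G : ℝ → Mat2}
    (hG : ∀ i j, Differentiable ℝ fun t => G t i j) (hG_pos : ∀ t, (G t).PosDef)
    (Γ : ℝ → Fin 2 → Fin 2 → Fin 2 → ℝ) {s φ : ℝ → ℝ} {t₀ : ℝ}
    (hs : s = fun t => ∫ α in t₀..t, √(deriv γ α ⬝ᵥ G α *ᵥ deriv γ α))
    (hsφ : Function.RightInverse φ s) :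
    Differentiable ℝ (deriv (γ ∘ φ)) ∧ ∀ r,
      covariantAcceleration (Γ (φ r)) (deriv (γ ∘ φ) r) (deriv (deriv (γ ∘ φ)) r) ⬝ᵥ
          G (φ r) *ᵥ gUnitNormal (G (φ r)) (deriv (γ ∘ φ) r) =
        geodesicCurvature (G (φ r)) (Γ (φ r)) (deriv γ (φ r)) (deriv (deriv γ) (φ r)) := by
  set speed : ℝ → ℝ := fun t => √(deriv γ t ⬝ᵥ G t *ᵥ deriv γ t)
  have sq_speed_pos (t : ℝ) : 0 < deriv γ t ⬝ᵥ G t *ᵥ deriv γ t := by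
    simpa only [star_trivial] using (hG_pos t).dotProduct_mulVec_pos (hτ t)
  have speed_pos (t : ℝ) : 0 < speed t := Real.sqrt_pos.2 (sq_speed_pos t)
  have speed_diff : Differentiable ℝ speed :=
    differentiable_sqrt_dotProduct_mulVec hG hγ' sq_speed_pos
  have hs_deriv (t : ℝ) : HasDerivAt s (speed t) t :=
    hs ▸ (speed_diff.continuous.integral_hasStrictDerivAt t₀ t).hasDerivAt
  have hφ_deriv := hasDerivAt_of_rightInverse_of_deriv_pos hs_deriv speed_pos hsφ
  have hφ : Differentiable ℝ φ := fun r => (hφ_deriv r).differentiableAt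
  have deriv_φ_eq : deriv φ = fun r => (speed (φ r))⁻¹ := funext fun r => (hφ_deriv r).deriv
  have hφ' : Differentiable ℝ (deriv φ) :=
    deriv_φ_eq ▸ (speed_diff.comp hφ).inv fun r => (speed_pos (φ r)).ne'
  have acceleration := hasDerivAt_deriv_comp hγ hγ' hφ hφ'
  refine ⟨fun r => (acceleration r).differentiableAt, fun r => ?_⟩
  have deriv_φ_pos : 0 < deriv φ r := by simpa only [deriv_φ_eq] using inv_pos.2 (speed_pos (φ r))
  have unit_speed :
      √((deriv φ r • deriv γ (φ r)) ⬝ᵥ G (φ r) *ᵥ (deriv φ r • deriv γ (φ r))) = 1 := by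
    rw [sqrt_smul_dotProduct_mulVec_smul _ _ deriv_φ_pos.le, deriv_φ_eq]
    exact inv_mul_cancel₀ (speed_pos (φ r)).ne'
  rw [(acceleration r).deriv, deriv.scomp r (hγ (φ r)) (hφ r),
    covariantAcceleration_dotProduct_mulVec_gUnitNormal (hG_pos _).det_pos _ unit_speed,
    geodesicCurvature_reparam _ _ _ _ _ deriv_φ_pos]

/-- formula for the geodesic curvature in an arbitrary parametrization. -/
theorem geodesicCurvature_formula
    (Ω : Set Vec2) (hΩ : IsOpen Ω)
    (g : Vec2 → Mat2)
    (hg : ∀ i j, ContDiffOn ℝ 1 (fun y => g y i j) Ω)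
    (hg_symm : ∀ x ∈ Ω, (g x).IsSymm) (hg_pos : ∀ x ∈ Ω, (g x).PosDef)
    (γ : ℝ → Vec2) (hγ : ContDiff ℝ 2 γ) (hγΩ : ∀ t, γ t ∈ Ω)
    (hτ : ∀ t, deriv γ t ≠ 0)
    (s : ℝ → ℝ)
    (hs : s = fun t => ∫ α in (0:ℝ)..t,
      Real.sqrt (deriv γ α ⬝ᵥ (g (γ α)).mulVec (deriv γ α)))
    (φ : ℝ → ℝ) (hφ : Differentiable ℝ φ)
    (hφs : ∀ t, φ (s t) = t) (hsφ : ∀ r, s (φ r) = r)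
    (μ : ℝ → Vec2) (hμ : μ = γ ∘ φ)
    (T : ℝ → Vec2) (hT : T = deriv μ)
    (κ : ℝ → ℝ)
    (hκ : κ = fun r =>
      (fun k => deriv T r k + ∑ i, ∑ j, Gamma2 g (μ r) i j k * T r i * T r j) ⬝ᵥ
        (g (μ r)).mulVec (gUnitNormal (g (μ r)) (T r))) :
    (∀ r, DifferentiableAt ℝ T r) ∧
    ∀ t, κ (s t) =
      Real.sqrt (g (γ t)).det /
          Real.sqrt (deriv γ t ⬝ᵥ (g (γ t)).mulVec (deriv γ t)) ^ 3 *
        (deriv (deriv γ) t ⬝ᵥ rot2 (deriv γ t) +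
          ∑ i, ∑ j, ∑ k,
            deriv γ t i * deriv γ t j * Gamma2 g (γ t) i j k * rot2 (deriv γ t) k) := by
  subst hμ hT hκ
  have hgγ (i j : Fin 2) : Differentiable ℝ fun t => g (γ t) i j := fun t =>
    (((hg i j).differentiableOn one_ne_zero).differentiableAt (hΩ.mem_nhds (hγΩ t))).comp t
      (hγ.differentiable two_ne_zero t)
  obtain ⟨hT_diff, hκ_eq⟩ := geodesicCurvature_formula_general (hγ.differentiable two_ne_zero)
    hγ.differentiable_deriv_two hτ hgγ (fun t => hg_pos _ (hγΩ t)) (fun t => Gamma2 g (γ t)) hs hsφ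
  refine ⟨hT_diff, fun t => (hκ_eq (s t)).trans ?_⟩
  rw [hφs, geodesicCurvature, covariantAcceleration_dotProduct]
end
end

section
/- Let Ω ⊆ ℝ² be open, let g, σ : Ω → (symmetric real 2×2 matrices) be C² with g(x) positive definite for all x, and let p ∈ Ω satisfy g(p) = I (identity matrix) and ∂_k g_{ij}(p) = 0 for all i, j, k. Then the covariant incompatibility satisfies (inc_g σ)(p) = inc σ(p) − ½ tr(σ(p)) · inc g(p), where inc is the Euclidean incompatibility and tr the matrix trace. -/
noncomputable section

open Matrix BigOperators

/-!
Where all first derivatives of `g` vanish, so do the Christoffel symbols. Only two terms of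
`inc_g σ` survive: the Euclidean incompatibility of `σ`, and the term in which the derivative falls
on a Christoffel symbol of the first kind. In the latter, the antisymmetrization
`ε^{qi} ∂_q Γ_{jil}` is the linear part of the curvature tensor, hence equal to `½ ε_{jl} inc g`,
and contracting with `ε^{jk}` leaves the trace of `g⁻¹ σ`.
-/

open Filter Topology

section Calculus

variable {𝕜 E F : Type*} [NontriviallyNormedField 𝕜] [NormedAddCommGroup E] [NormedSpace 𝕜 E]
  [NormedAddCommGroup F] [NormedSpace 𝕜 F]

/-- Since `f x = 0`, mere continuity of `c` suffices: its increment multiplies `f y = O(y - x)`. -/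
lemma hasFDerivAt_smul_of_eq_zero {c : E → 𝕜} {f : E → F} {f' : E →L[𝕜] F} {x : E}
    (hc : ContinuousAt c x) (hf : HasFDerivAt f f' x) (hfx : f x = 0) :
    HasFDerivAt (fun y => c y • f y) (c x • f') x := by
  have hc_sub : (fun y => c y - c x) =o[𝓝 x] (fun _ => (1 : 𝕜)) :=
    (Asymptotics.isLittleO_one_iff 𝕜).2 (tendsto_sub_nhds_zero_iff.2 hc)
  have hf_bigO : f =O[𝓝 x] (fun y => y - x) := by
    simpa only [hfx, sub_zero] using hf.isBigO_sub
  have h_increment : (fun y => (c y - c x) • f y) =o[𝓝 x] (fun y => y - x) := by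
    simpa only [one_smul] using hc_sub.smul_isBigO hf_bigO
  refine .of_isLittleO ((h_increment.add ((hf.const_smul (c x)).isLittleO)).congr_left fun y => ?_)
  simp only [hfx, _root_.smul_apply, Pi.smul_apply]
  module

lemma differentiableAt_fderiv_of_contDiffAt_two {f : E → F} {x : E} (hf : ContDiffAt 𝕜 2 f x) :
    DifferentiableAt 𝕜 (fderiv 𝕜 f) x :=
  (hf.fderiv_right (m := 1) one_add_one_eq_two.le).differentiableAt one_ne_zero

end Calculus

lemma continuousAt_matrix_inv_of_det_ne_zero {n K : Type*} [Fintype n] [DecidableEq n] [Field K]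
    [TopologicalSpace K] [IsTopologicalRing K] [ContinuousInv₀ K] {A : Matrix n n K}
    (hA : A.det ≠ 0) : ContinuousAt (fun B : Matrix n n K => B⁻¹) A :=
  continuousAt_matrix_inv A (by simpa only [Ring.inverse_eq_inv'] using continuousAt_inv₀ hA)

section PartialDerivatives

variable {p : Vec2}

lemma eventuallyEq_pd {f h : Vec2 → ℝ} (hfh : f =ᶠ[𝓝 p] h) (i : Fin 2) :
    pd i f =ᶠ[𝓝 p] pd i h :=
  hfh.fderiv.fun_comp fun L => L (Pi.single i 1)

lemma pd_sum_mul_of_eq_zero {ι : Type*} {s : Finset ι} {a b : ι → Vec2 → ℝ}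
    (ha : ∀ l ∈ s, ContinuousAt (a l) p) (hb : ∀ l ∈ s, DifferentiableAt ℝ (b l) p)
    (hbp : ∀ l ∈ s, b l p = 0) (q : Fin 2) :
    pd q (fun y => ∑ l ∈ s, a l y * b l y) p = ∑ l ∈ s, a l p * pd q (b l) p := by
  have h := HasFDerivAt.fun_sum fun l hl =>
    hasFDerivAt_smul_of_eq_zero (ha l hl) (hb l hl).hasFDerivAt (hbp l hl)
  simp only [smul_eq_mul] at h
  simp [pd, h.fderiv]

lemma differentiableAt_pd {f : Vec2 → ℝ} (hf : ContDiffAt ℝ 2 f p) (i : Fin 2) :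
    DifferentiableAt ℝ (pd i f) p :=
  (differentiableAt_fderiv_of_contDiffAt_two hf).clm_apply (differentiableAt_const _)

lemma pd_pd_eq_fderiv_fderiv {f : Vec2 → ℝ} (hf : ContDiffAt ℝ 2 f p) (i j : Fin 2) :
    pd i (pd j f) p = fderiv ℝ (fderiv ℝ f) p (Pi.single i 1) (Pi.single j 1) := by
  unfold pd
  rw [fderiv_clm_apply (differentiableAt_fderiv_of_contDiffAt_two hf) (differentiableAt_const _)]
  simp

lemma pd_comm {f : Vec2 → ℝ} (hf : ContDiffAt ℝ 2 f p) (i j : Fin 2) :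
    pd i (pd j f) p = pd j (pd i f) p := by
  rw [pd_pd_eq_fderiv_fderiv hf, pd_pd_eq_fderiv_fderiv hf]
  exact (hf.isSymmSndFDerivAt (by simp)).eq _ _

lemma pd_pd_symm {A : Vec2 → Mat2} (hA : ∀ᶠ y in 𝓝 p, (A y).IsSymm) (q r i j : Fin 2) :
    pd q (pd r (fun y => A y i j)) p = pd q (pd r (fun y => A y j i)) p := by
  have h_entry : (fun y => A y i j) =ᶠ[𝓝 p] (fun y => A y j i) :=
    hA.mono fun y hy => hy.apply j i
  exact (eventuallyEq_pd (eventuallyEq_pd h_entry r) q).eq_of_nhds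

end PartialDerivatives

section AlternatingSymbol

@[simp] lemma eps2_self (i : Fin 2) : eps2 i i = 0 := sub_self _

@[simp] lemma eps2_zero_one : eps2 0 1 = 1 := by simp [eps2]

@[simp] lemma eps2_one_zero : eps2 1 0 = -1 := by simp [eps2]

lemma sum_eps2_mul_eps2 (k l : Fin 2) : ∑ j, eps2 j k * eps2 j l = (1 : Mat2) l k := by
  fin_cases k <;> fin_cases l <;> simp

lemma sum_eps2_mul_pd_pd_eq_incE {σ : Vec2 → Mat2} {p : Vec2}
    (hσ : ContDiffAt ℝ 2 (fun y => σ y 0 1) p) (hσ_symm : ∀ᶠ y in 𝓝 p, (σ y).IsSymm) :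
    ∑ q, ∑ i, ∑ j, ∑ k, eps2 q i * eps2 j k * pd j (pd q (fun y => σ y i k)) p = incE σ p := by
  simp only [Fin.sum_univ_two, eps2_self, eps2_zero_one, eps2_one_zero, incE,
    pd_pd_symm hσ_symm _ _ 1 0, pd_comm hσ 1 0]
  ring

end AlternatingSymbol

section Christoffel

variable {g : Vec2 → Mat2} {p : Vec2}

lemma Gamma1_eq_zero (hdg : ∀ i j k, pd k (fun y => g y i j) p = 0) (i j l : Fin 2) :
    Gamma1 g p i j l = 0 := by
  simp [Gamma1, hdg]

lemma Gamma2_eq_zero (hdg : ∀ i j k, pd k (fun y => g y i j) p = 0) (i j k : Fin 2) :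
    Gamma2 g p i j k = 0 := by
  simp [Gamma2, Gamma1_eq_zero hdg]

lemma sum_Gamma2_mul (g : Vec2 → Mat2) (A : Mat2) (x : Vec2) (i j k : Fin 2) :
    ∑ m, Gamma2 g x i j m * A m k = ∑ l, (((g x)⁻¹)ᵀ * A) l k * Gamma1 g x i j l := by
  simp only [Gamma2, mul_apply, transpose_apply, Finset.sum_mul]
  rw [Finset.sum_comm]
  exact Finset.sum_congr rfl fun l _ => Finset.sum_congr rfl fun m _ => mul_right_comm _ _ _

lemma hasFDerivAt_Gamma1 (hg : ∀ i j, ContDiffAt ℝ 2 (fun y => g y i j) p) (i j l : Fin 2) :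
    HasFDerivAt (fun y => Gamma1 g y i j l)
      ((2 : ℝ)⁻¹ • (fderiv ℝ (pd i fun y => g y j l) p + fderiv ℝ (pd j fun y => g y l i) p
        - fderiv ℝ (pd l fun y => g y i j) p)) p := by
  have h (a b c : Fin 2) := (differentiableAt_pd (hg b c) a).hasFDerivAt
  simpa only [Gamma1, div_eq_mul_inv] using
    (((h i j l).fun_add (h j l i)).fun_sub (h l i j)).mul_const (2⁻¹ : ℝ)

lemma pd_Gamma1 (hg : ∀ i j, ContDiffAt ℝ 2 (fun y => g y i j) p) (q i j l : Fin 2) :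
    pd q (fun y => Gamma1 g y i j l) p =
      (pd q (pd i fun y => g y j l) p + pd q (pd j fun y => g y l i) p
        - pd q (pd l fun y => g y i j) p) / 2 := by
  rw [pd, (hasFDerivAt_Gamma1 hg i j l).fderiv]
  simp [pd, div_eq_inv_mul]

lemma sum_eps2_mul_pd_Gamma1 (hg : ∀ i j, ContDiffAt ℝ 2 (fun y => g y i j) p)
    (hg_symm : ∀ᶠ y in 𝓝 p, (g y).IsSymm) (j l : Fin 2) :
    ∑ q, ∑ i, eps2 q i * pd q (fun y => Gamma1 g y j i l) p = eps2 j l / 2 * incE g p := by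
  simp only [Fin.sum_univ_two, eps2_self, eps2_zero_one, eps2_one_zero, pd_Gamma1 hg, incE]
  fin_cases j <;> fin_cases l <;>
    simp [pd_pd_symm hg_symm _ _ 1 0, pd_comm (hg _ _) 1 0] <;> ring

lemma pd_sum_Gamma2_mul {σ : Vec2 → Mat2} (hg : ∀ i j, ContDiffAt ℝ 2 (fun y => g y i j) p)
    (hg_symm : (g p).IsSymm) (hg_det : (g p).det ≠ 0)
    (hdg : ∀ i j k, pd k (fun y => g y i j) p = 0) (hσ : ContinuousAt σ p) (q i j k : Fin 2) :
    pd q (fun y => ∑ m, Gamma2 g y i j m * σ y m k) p =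
      ∑ l, ((g p)⁻¹ * σ p) l k * pd q (fun y => Gamma1 g y i j l) p := by
  have hg_cont : ContinuousAt g p :=
    continuousAt_pi.2 fun a => continuousAt_pi.2 fun b => (hg a b).continuousAt
  have hg_inv : ContinuousAt (fun y => (g y)⁻¹) p :=
    (continuousAt_matrix_inv_of_det_ne_zero hg_det).comp hg_cont
  have h_coeff (l : Fin 2) : ContinuousAt (fun y => (((g y)⁻¹)ᵀ * σ y) l k) p :=
    (continuous_id.matrix_elem l k).continuousAt.comp
      ((continuous_id.matrix_transpose.continuousAt.comp hg_inv).mul hσ)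
  simp only [sum_Gamma2_mul]
  rw [pd_sum_mul_of_eq_zero (fun l _ => h_coeff l)
    (fun l _ => (hasFDerivAt_Gamma1 hg i j l).differentiableAt)
    (fun l _ => Gamma1_eq_zero hdg i j l), transpose_nonsing_inv, hg_symm.eq]

lemma sum_eps2_mul_sum_mul_pd_Gamma1 (hg : ∀ i j, ContDiffAt ℝ 2 (fun y => g y i j) p)
    (hg_symm : ∀ᶠ y in 𝓝 p, (g y).IsSymm) (S : Mat2) :
    ∑ q, ∑ i, ∑ j, ∑ k, eps2 q i * eps2 j k * ∑ l, S l k * pd q (fun y => Gamma1 g y j i l) p =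
      1 / 2 * S.trace * incE g p := by
  calc
    _ = ∑ j, ∑ k, ∑ l, eps2 j k * S l k *
          ∑ q, ∑ i, eps2 q i * pd q (fun y => Gamma1 g y j i l) p := by
      simp only [Fin.sum_univ_two]
      ring
    _ = 1 / 2 * (∑ k, ∑ l, S l k * ∑ j, eps2 j k * eps2 j l) * incE g p := by
      simp only [sum_eps2_mul_pd_Gamma1 hg hg_symm]
      simp only [Fin.sum_univ_two]
      ring
    _ = 1 / 2 * S.trace * incE g p := by
      simp only [sum_eps2_mul_eps2, one_apply, mul_ite, mul_one, mul_zero, Finset.sum_ite_eq',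
        Finset.mem_univ, if_true, trace, diag]

end Christoffel

theorem incg_normal_coords_general {g σ : Vec2 → Mat2} {p : Vec2}
    (hg : ∀ i j, ContDiffAt ℝ 2 (fun y => g y i j) p)
    (hσ : ∀ i j, ContDiffAt ℝ 2 (fun y => σ y i j) p)
    (hg_symm : ∀ᶠ y in 𝓝 p, (g y).IsSymm) (hσ_symm : ∀ᶠ y in 𝓝 p, (σ y).IsSymm)
    (hg_det : (g p).det ≠ 0) (hdg : ∀ i j k, pd k (fun y => g y i j) p = 0) :
    incg g σ p =
      ((g p).det)⁻¹ * (incE σ p - 1 / 2 * ((g p)⁻¹ * σ p).trace * incE g p) := by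
  have hσ_cont : ContinuousAt σ p :=
    continuousAt_pi.2 fun i => continuousAt_pi.2 fun j => (hσ i j).continuousAt
  simp only [incg, sum_eps2_mul_pd_pd_eq_incE (hσ 0 1) hσ_symm, Gamma2_eq_zero hdg,
    pd_sum_Gamma2_mul hg hg_symm.self_of_nhds hg_det hdg hσ_cont,
    sum_eps2_mul_sum_mul_pd_Gamma1 hg hg_symm, Finset.sum_const_zero, zero_mul, sub_zero]

/-- covariant incompatibility in Riemann normal coordinates. -/
theorem incg_normal_coords
    (Ω : Set Vec2) (hΩ : IsOpen Ω)
    (g σ : Vec2 → Mat2)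
    (hg : ∀ i j, ContDiffOn ℝ 2 (fun y => g y i j) Ω)
    (hσ : ∀ i j, ContDiffOn ℝ 2 (fun y => σ y i j) Ω)
    (hg_symm : ∀ x ∈ Ω, (g x).IsSymm) (hσ_symm : ∀ x ∈ Ω, (σ x).IsSymm)
    (hg_pos : ∀ x ∈ Ω, (g x).PosDef)
    (p : Vec2) (hp : p ∈ Ω) (hgp : g p = 1)
    (hdg : ∀ i j k, pd k (fun y => g y i j) p = 0) :
    incg g σ p = incE σ p - 1 / 2 * (σ p).trace * incE g p := by
  have hΩp : Ω ∈ 𝓝 p := hΩ.mem_nhds hp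
  have h := incg_normal_coords_general
    (fun i j => (hg i j).contDiffAt hΩp) (fun i j => (hσ i j).contDiffAt hΩp)
    (eventually_of_mem hΩp hg_symm) (eventually_of_mem hΩp hσ_symm) (by simp [hgp]) hdg
  simpa [hgp] using h
end
end

section
/- Let g be a symmetric positive definite real 2×2 matrix, σ a symmetric real 2×2 matrix, and (τ, ν) a Euclidean orthonormal basis of ℝ². Then the function t ↦ (νᵀ(g+tσ)τ) / ( (τᵀ(g+tσ)τ) · √(det(g+tσ)) ) is differentiable at t = 0 with derivative (τᵀστ) · ( −(νᵀgτ)(2 det g + (τᵀgτ)(νᵀgν)) / (2 (τᵀgτ)² (det g)^{3/2}) ) + ( 2 (νᵀgν)(νᵀστ) − (νᵀgτ)(νᵀσν) ) / (2 (det g)^{3/2}). (First-order expansion of g_{ντ}/(g_{ττ}√(det g)): the derivative splits into a multiple of the tangential-tangential component σ_{ττ} and a term involving only σ_{ντ} and σ_{νν}.) -/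
noncomputable section

open Matrix BigOperators

/-! Pairing with `τ` and `ν` evaluates the entries of `P * M * Pᵀ`, where `P` has rows `τ` and `ν`.
If `det P = ±1` this change of basis preserves determinants, so `det g = g_{ττ} g_{νν} - g_{ντ}²`
for symmetric `g`. Hence the whole quotient is a function of the three components along `τ` and `ν`,
each affine in `t`. After the quotient rule, the same identity `det g + g_{ντ}² = g_{ττ} g_{νν}`
collects the coefficient of `σ_{ντ}`. -/

section BilinearForm

variable {R : Type*} [CommSemiring R]

lemma dotProduct_add_smul_mulVec {m n : Type*} [Fintype m] [Fintype n]
    (M N : Matrix m n R) (v : m → R) (w : n → R) (t : R) :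
    v ⬝ᵥ (M + t • N) *ᵥ w = v ⬝ᵥ M *ᵥ w + t * (v ⬝ᵥ N *ᵥ w) := by
  rw [add_mulVec, smul_mulVec, dotProduct_add, dotProduct_smul, smul_eq_mul]

lemma dotProduct_mulVec_comm_of_isSymm {n : Type*} [Fintype n] {M : Matrix n n R}
    (hM : M.IsSymm) (v w : n → R) : v ⬝ᵥ M *ᵥ w = w ⬝ᵥ M *ᵥ v := by
  rw [← dotProduct_transpose_mulVec, hM.eq]

end BilinearForm

section Determinant

variable {R : Type*} [CommRing R]

lemma det_rows_sq_mul_det (M : Matrix (Fin 2) (Fin 2) R) (v w : Fin 2 → R) :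
    (of ![v, w]).det ^ 2 * M.det =
      (v ⬝ᵥ M *ᵥ v) * (w ⬝ᵥ M *ᵥ w) - (v ⬝ᵥ M *ᵥ w) * (w ⬝ᵥ M *ᵥ v) := by
  calc (of ![v, w]).det ^ 2 * M.det = (of ![v, w] * M * (of ![v, w])ᵀ).det := by
        rw [det_mul, det_mul, det_transpose]
        ring
    _ = (v ⬝ᵥ M *ᵥ v) * (w ⬝ᵥ M *ᵥ w) - (v ⬝ᵥ M *ᵥ w) * (w ⬝ᵥ M *ᵥ v) := by
        simp only [det_fin_two, mul_mul_apply, transpose_transpose]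
        rfl

lemma det_rows_sq_eq_one_of_orthonormal {v w : Fin 2 → R}
    (hv : v ⬝ᵥ v = 1) (hw : w ⬝ᵥ w = 1) (hvw : v ⬝ᵥ w = 0) : (of ![v, w]).det ^ 2 = 1 := by
  simpa [hv, hw, hvw] using det_rows_sq_mul_det 1 v w

lemma det_eq_of_isSymm_of_det_rows_sq_eq_one {M : Matrix (Fin 2) (Fin 2) R} (hM : M.IsSymm)
    {v w : Fin 2 → R} (hvw : (of ![v, w]).det ^ 2 = 1) :
    M.det = (v ⬝ᵥ M *ᵥ v) * (w ⬝ᵥ M *ᵥ w) - (w ⬝ᵥ M *ᵥ v) ^ 2 := by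
  have h := det_rows_sq_mul_det M v w
  rwa [hvw, one_mul, dotProduct_mulVec_comm_of_isSymm hM v w, ← sq] at h

end Determinant

section Calculus

variable {𝕜 : Type*} [NontriviallyNormedField 𝕜]

lemma hasDerivAt_dotProduct_add_smul_mulVec {m n : Type*} [Fintype m] [Fintype n]
    (M N : Matrix m n 𝕜) (v : m → 𝕜) (w : n → 𝕜) (t : 𝕜) :
    HasDerivAt (fun s : 𝕜 => v ⬝ᵥ (M + s • N) *ᵥ w) (v ⬝ᵥ N *ᵥ w) t := by
  simp only [dotProduct_add_smul_mulVec]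
  simpa using ((hasDerivAt_id t).mul_const (v ⬝ᵥ N *ᵥ w)).const_add (v ⬝ᵥ M *ᵥ w)

lemma hasDerivAt_det_add_smul_of_isSymm {M N : Matrix (Fin 2) (Fin 2) 𝕜}
    (hM : M.IsSymm) (hN : N.IsSymm) {v w : Fin 2 → 𝕜} (hvw : (of ![v, w]).det ^ 2 = 1) (t : 𝕜) :
    HasDerivAt (fun s : 𝕜 => (M + s • N).det)
      ((v ⬝ᵥ N *ᵥ v) * (w ⬝ᵥ (M + t • N) *ᵥ w) + (v ⬝ᵥ (M + t • N) *ᵥ v) * (w ⬝ᵥ N *ᵥ w)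
        - 2 * (w ⬝ᵥ (M + t • N) *ᵥ v) * (w ⬝ᵥ N *ᵥ v)) t := by
  have hdet (s : 𝕜) := det_eq_of_isSymm_of_det_rows_sq_eq_one (hM.add (hN.smul s)) hvw
  have hcomp (x y : Fin 2 → 𝕜) := hasDerivAt_dotProduct_add_smul_mulVec M N x y t
  simp only [hdet]
  refine (((hcomp v v).fun_mul (hcomp w w)).fun_sub ((hcomp w v).fun_pow 2)).congr_deriv ?_
  norm_num

lemma hasDerivAt_div_mul_sqrt {u v w : ℝ → ℝ} {u' v' w' x : ℝ} (hu : HasDerivAt u u' x)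
    (hv : HasDerivAt v v' x) (hw : HasDerivAt w w' x) (hvx : v x ≠ 0) (hwx : 0 < w x) :
    HasDerivAt (fun t => u t / (v t * √(w t)))
      ((2 * u' * v x * w x - 2 * u x * v' * w x - u x * v x * w') /
        (2 * v x ^ 2 * √(w x) ^ 3)) x := by
  have hs : √(w x) ≠ 0 := (Real.sqrt_pos.mpr hwx).ne'
  have hs_sq : √(w x) ^ 2 = w x := Real.sq_sqrt hwx.le
  refine (hu.fun_div (hv.fun_mul (hw.sqrt hwx.ne')) (mul_ne_zero hvx hs)).congr_deriv ?_
  field_simp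
  rw [hs_sq]
  ring

end Calculus

theorem firstVariation_beta2_general {g σ : Mat2} (hg_symm : g.IsSymm) (hg_det : 0 < g.det)
    (hσ_symm : σ.IsSymm) {τ ν : Vec2} (hτν : (of ![τ, ν]).det ^ 2 = 1) :
    HasDerivAt
      (fun t : ℝ => (ν ⬝ᵥ (g + t • σ).mulVec τ) /
        ((τ ⬝ᵥ (g + t • σ).mulVec τ) * Real.sqrt (g + t • σ).det))
      ((τ ⬝ᵥ σ.mulVec τ) *
          (-(ν ⬝ᵥ g.mulVec τ) * (2 * g.det + (τ ⬝ᵥ g.mulVec τ) * (ν ⬝ᵥ g.mulVec ν)) /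
            (2 * (τ ⬝ᵥ g.mulVec τ) ^ 2 * Real.sqrt g.det ^ 3)) +
        (2 * (ν ⬝ᵥ g.mulVec ν) * (ν ⬝ᵥ σ.mulVec τ)
          - (ν ⬝ᵥ g.mulVec τ) * (ν ⬝ᵥ σ.mulVec ν)) / (2 * Real.sqrt g.det ^ 3)) 0 := by
  have hdet : g.det = (τ ⬝ᵥ g *ᵥ τ) * (ν ⬝ᵥ g *ᵥ ν) - (ν ⬝ᵥ g *ᵥ τ) ^ 2 :=
    det_eq_of_isSymm_of_det_rows_sq_eq_one hg_symm hτν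
  have hpos : 0 < (τ ⬝ᵥ g *ᵥ τ) * (ν ⬝ᵥ g *ᵥ ν) := by
    linarith [sq_nonneg (ν ⬝ᵥ g *ᵥ τ)]
  have hττ : τ ⬝ᵥ g *ᵥ τ ≠ 0 := left_ne_zero_of_mul hpos.ne'
  have hderiv := hasDerivAt_div_mul_sqrt
    (hasDerivAt_dotProduct_add_smul_mulVec g σ ν τ 0)
    (hasDerivAt_dotProduct_add_smul_mulVec g σ τ τ 0)
    (hasDerivAt_det_add_smul_of_isSymm hg_symm hσ_symm hτν 0)
    (by simpa only [zero_smul, add_zero] using hττ)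
    (by simpa only [zero_smul, add_zero] using hg_det)
  simp only [zero_smul, add_zero] at hderiv
  refine hderiv.congr_deriv ?_
  have hsqrt : √g.det ≠ 0 := (Real.sqrt_pos.mpr hg_det).ne'
  field_simp
  linear_combination (2 * (τ ⬝ᵥ g *ᵥ τ) * (ν ⬝ᵥ σ *ᵥ τ)) * hdet

/-- first variation of `g_{ντ}/(g_{ττ} √(det g))`. -/
theorem firstVariation_beta2
    (g : Mat2) (hg_symm : g.IsSymm) (hg_pos : g.PosDef)
    (σ : Mat2) (hσ_symm : σ.IsSymm)
    (τ ν : Vec2) (hτ : τ ⬝ᵥ τ = 1) (hν : ν ⬝ᵥ ν = 1) (hτν : τ ⬝ᵥ ν = 0) :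
    HasDerivAt
      (fun t : ℝ => (ν ⬝ᵥ (g + t • σ).mulVec τ) /
        ((τ ⬝ᵥ (g + t • σ).mulVec τ) * Real.sqrt (g + t • σ).det))
      ((τ ⬝ᵥ σ.mulVec τ) *
          (-(ν ⬝ᵥ g.mulVec τ) * (2 * g.det + (τ ⬝ᵥ g.mulVec τ) * (ν ⬝ᵥ g.mulVec ν)) /
            (2 * (τ ⬝ᵥ g.mulVec τ) ^ 2 * Real.sqrt g.det ^ 3)) +
        (2 * (ν ⬝ᵥ g.mulVec ν) * (ν ⬝ᵥ σ.mulVec τ)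
          - (ν ⬝ᵥ g.mulVec τ) * (ν ⬝ᵥ σ.mulVec ν)) / (2 * Real.sqrt g.det ^ 3)) 0 := by
  exact firstVariation_beta2_general hg_symm hg_pos.det_pos hσ_symm
    (det_rows_sq_eq_one_of_orthonormal hτ hν hτν)
end
end
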